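/- arXiv:2403.19673 — 4 statements merged into one kernel-verified Lean document; each statement's English description precedes it below -/
import Mathlib

section
/- Let D ⊆ ℝ², let P₀ = (x₀, y₀) be an accumulation point of D, let f : ℝ² → ℝ and L ∈ ℝ. Then f(P) → L as P → P₀ within D (i.e., the limit of f at P₀ along D \ {P₀} is L) if and only if: for every constant φ₀ ∈ [0, 2π] and every pair of sequences (rₙ) and (φₙ) of real numbers with rₙ > 0, rₙ → 0 and φₙ → φ₀, such that every point Pₙ = (x₀ + rₙ·cos φₙ, y₀ + rₙ·sin φₙ) lies in D, the sequence f(Pₙ) converges to L. -/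
/-!
In polar coordinates `(r, φ)` about `P₀`, the punctured neighbourhoods of `P₀` are the images of the
neighbourhoods of `{0} × [0, 2π]` in `{r > 0}`. As `[0, 2π]` is compact, these are generated by the
neighbourhoods of the single points `(0, φ₀)`: the filter at `P₀` is the supremum over `φ₀` of the
images of the filters at `(0, φ₀)`. Each of the latter is countably generated, so a limit along it
can be tested on sequences `(rₙ, φₙ) → (0, φ₀)`.
-/

open Filter Topology Real

/-- A point of the Euclidean plane given by its two coordinates. -/
noncomputable def pt (x y : ℝ) : EuclideanSpace ℝ (Fin 2) :=
  (EuclideanSpace.equiv (Fin 2) ℝ).symm ![x, y]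

theorem tendsto_inf_principal_iff_forall_seq {X α : Type*} {f : X → α} {k : Filter X}
    [k.IsCountablyGenerated] {s : Set X} {l : Filter α} :
    Tendsto f (k ⊓ 𝓟 s) l ↔
      ∀ u : ℕ → X, Tendsto u atTop k → (∀ n, u n ∈ s) → Tendsto (f ∘ u) atTop l := by
  refine ⟨fun hf u hu hus => hf.comp (tendsto_inf.2 ⟨hu, tendsto_principal.2 (.of_forall hus)⟩),
    fun hseq t ht => mem_map.2 (mem_inf_principal.2 ?_)⟩
  by_contra hbad
  have hfreq : ∃ᶠ x in k, x ∈ s ∧ f x ∉ t := fun h =>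
    hbad (h.mono fun x hx hxs => by_contra fun hxt => hx ⟨hxs, hxt⟩)
  obtain ⟨u, hu, hus⟩ := exists_seq_forall_of_frequently hfreq
  obtain ⟨n, hn⟩ := ((hseq u hu fun n => (hus n).1).eventually_mem ht).exists
  exact (hus n).2 hn

section PolarCoordinates

variable {X Θ α : Type*} [MetricSpace X]

theorem comap_dist_nhdsGT_zero (a : X) : comap (dist · a) (𝓝[>] 0) = 𝓝[≠] a := by
  have hpos : (dist · a) ⁻¹' Set.Ioi 0 = {a}ᶜ := Set.ext fun _ => dist_pos
  rw [nhdsWithin, comap_inf, nhds_comap_dist, comap_principal, hpos, nhdsWithin]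

/-- `p` gives polar coordinates on `X` centred at `a`: `p (r, θ)` is at distance `r` from `a`, and
every point other than `a` has an angle in `K`. Angles need not be unique, and nothing is assumed
about `p (r, θ)` for `r ≤ 0`. -/
structure IsPolarAt (p : ℝ × Θ → X) (a : X) (K : Set Θ) : Prop where
  dist_eq : ∀ r θ, 0 < r → dist (p (r, θ)) a = r
  exists_angle : ∀ x ≠ a, ∃ θ ∈ K, p (dist x a, θ) = x

namespace IsPolarAt

variable {p : ℝ × Θ → X} {a : X} {K : Set Θ}

theorem map_nhdsGT_prod (hp : IsPolarAt p a K) {F : Filter Θ} (hF : 𝓟 K ≤ F) :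
    map p (𝓝[>] 0 ×ˢ F) = 𝓝[≠] a := by
  rw [← comap_dist_nhdsGT_zero]
  apply le_antisymm
  · have hradius : (dist · a) ∘ p =ᶠ[𝓝[>] 0 ×ˢ F] Prod.fst :=
      (tendsto_fst.eventually_mem self_mem_nhdsWithin).mono fun q hq => hp.dist_eq q.1 q.2 hq
    exact tendsto_comap_iff.2 (tendsto_fst.congr' hradius.symm)
  · intro s hs
    obtain ⟨R, hR, A, hA, hRA⟩ := mem_prod_iff.1 (mem_map.1 hs)
    refine ⟨R ∩ Set.Ioi 0, inter_mem hR self_mem_nhdsWithin, fun x hx => ?_⟩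
    obtain ⟨θ, hθ, hpx⟩ := hp.exists_angle x (dist_pos.1 hx.2)
    exact hpx ▸ hRA ⟨hx.1, hF hA hθ⟩

variable [TopologicalSpace Θ]

theorem nhdsNE_eq_biSup (hp : IsPolarAt p a K) (hK : IsCompact K) :
    𝓝[≠] a = ⨆ θ ∈ K, map p (𝓝[>] 0 ×ˢ 𝓝 θ) := by
  simp only [← hp.map_nhdsGT_prod principal_le_nhdsSet, hK.prod_nhdsSet_eq_biSup, map_iSup]

theorem nhdsWithin_sdiff_singleton_eq_biSup (hp : IsPolarAt p a K) (hK : IsCompact K) (D : Set X) :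
    𝓝[D \ {a}] a = ⨆ θ ∈ K, map p (𝓝[{q | 0 < q.1 ∧ p q ∈ D}] (0, θ)) := by
  have hsector (θ : Θ) :
      𝓝[{q | 0 < q.1 ∧ p q ∈ D}] (0, θ) = (𝓝[>] 0 ×ˢ 𝓝 θ) ⊓ 𝓟 (p ⁻¹' D) := by
    rw [← nhdsWithin_univ θ, ← nhdsWithin_prod_eq, nhdsWithin, nhdsWithin, inf_assoc,
      inf_principal]
    congr 2
    ext q
    simp
  rw [Set.sdiff_eq, Set.inter_comm, nhdsWithin_inter', hp.nhdsNE_eq_biSup hK]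
  simp only [hsector, map_inf_principal_preimage, iSup_inf_principal]

end IsPolarAt

theorem stmt_0_general [TopologicalSpace Θ] [FirstCountableTopology Θ] {p : ℝ × Θ → X} {a : X}
    {K : Set Θ} (hp : IsPolarAt p a K) (hK : IsCompact K) (D : Set X) (f : X → α)
    (l : Filter α) :
    Tendsto f (𝓝[D \ {a}] a) l ↔
      ∀ θ₀ ∈ K, ∀ (r : ℕ → ℝ) (θ : ℕ → Θ),
        (∀ n, 0 < r n) → Tendsto r atTop (𝓝 0) → Tendsto θ atTop (𝓝 θ₀) →
        (∀ n, p (r n, θ n) ∈ D) → Tendsto (fun n => f (p (r n, θ n))) atTop l := by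
  simp only [hp.nhdsWithin_sdiff_singleton_eq_biSup hK, tendsto_iSup, tendsto_map'_iff]
  refine forall₂_congr fun θ₀ _ => tendsto_inf_principal_iff_forall_seq.trans ⟨?_, ?_⟩
  · intro h r θ hr hr0 hθ hD
    exact h (fun n => (r n, θ n)) (hr0.prodMk_nhds hθ) fun n => ⟨hr n, hD n⟩
  · intro h u hu hus
    exact h (fun n => (u n).1) (fun n => (u n).2) (fun n => (hus n).1) hu.fst_nhds hu.snd_nhds
      fun n => (hus n).2

end PolarCoordinates

section EuclideanPlane

theorem dist_pt (P : EuclideanSpace ℝ (Fin 2)) (x y : ℝ) :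
    dist P (pt x y) = √((P 0 - x) ^ 2 + (P 1 - y) ^ 2) := by
  simp [EuclideanSpace.dist_eq, Fin.sum_univ_two, Real.dist_eq, pt]

/-- The point with polar coordinates `q = (r, φ)` about the centre `(x₀, y₀)`. -/
noncomputable def polarPt (x₀ y₀ : ℝ) (q : ℝ × ℝ) : EuclideanSpace ℝ (Fin 2) :=
  pt (x₀ + q.1 * Real.cos q.2) (y₀ + q.1 * Real.sin q.2)

theorem dist_polarPt (x₀ y₀ r φ : ℝ) : dist (polarPt x₀ y₀ (r, φ)) (pt x₀ y₀) = |r| := by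
  have hsq : (x₀ + r * Real.cos φ - x₀) ^ 2 + (y₀ + r * Real.sin φ - y₀) ^ 2 = r ^ 2 := by
    linear_combination r ^ 2 * Real.sin_sq_add_cos_sq φ
  rw [dist_pt, ← Real.sqrt_sq_eq_abs, ← hsq]
  rfl

theorem polarPt_periodic (x₀ y₀ r : ℝ) :
    Function.Periodic (fun φ => polarPt x₀ y₀ (r, φ)) (2 * π) := fun φ => by
  simp only [polarPt, Real.cos_add_two_pi, Real.sin_add_two_pi]

theorem polarPt_dist_arg (x₀ y₀ : ℝ) (P : EuclideanSpace ℝ (Fin 2)) :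
    polarPt x₀ y₀ (dist P (pt x₀ y₀), Complex.arg ⟨P 0 - x₀, P 1 - y₀⟩) = P := by
  rw [dist_pt, ← Complex.norm_eq_sqrt_sq_add_sq ⟨P 0 - x₀, P 1 - y₀⟩]
  ext i
  fin_cases i <;> simp [polarPt, pt, Complex.norm_mul_cos_arg, Complex.norm_mul_sin_arg]

theorem isPolarAt_polarPt (x₀ y₀ φ₁ : ℝ) :
    IsPolarAt (polarPt x₀ y₀) (pt x₀ y₀) (Set.Icc φ₁ (φ₁ + 2 * π)) where
  dist_eq r φ hr := by rw [dist_polarPt, abs_of_pos hr]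
  exists_angle P _ := by
    have himage := (polarPt_periodic x₀ y₀ (dist P (pt x₀ y₀))).image_Icc Real.two_pi_pos φ₁
    exact himage.ge ⟨_, polarPt_dist_arg x₀ y₀ P⟩

end EuclideanPlane

/-- **Theorem 1.** For `D ⊆ ℝ²`, an accumulation point `P₀ = (x₀, y₀)` of `D`,
`f : ℝ² → ℝ` and `L ∈ ℝ`: the limit of `f` at `P₀` within `D` is `L` iff for every
`φ₀ ∈ [0, 2π]` and sequences `rₙ > 0`, `rₙ → 0`, `φₙ → φ₀` such that each point
`Pₙ = (x₀ + rₙ cos φₙ, y₀ + rₙ sin φₙ)` lies in `D`, one has `f (Pₙ) → L`. -/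
theorem stmt_0 (D : Set (EuclideanSpace ℝ (Fin 2))) (x₀ y₀ : ℝ)
    (hacc : AccPt (pt x₀ y₀) (𝓟 D)) (f : EuclideanSpace ℝ (Fin 2) → ℝ) (L : ℝ) :
    Tendsto f (𝓝[D \ {pt x₀ y₀}] (pt x₀ y₀)) (𝓝 L) ↔
      ∀ φ₀ ∈ Set.Icc (0 : ℝ) (2 * π), ∀ r φ : ℕ → ℝ,
        (∀ n, 0 < r n) → Tendsto r atTop (𝓝 0) → Tendsto φ atTop (𝓝 φ₀) →
        (∀ n, pt (x₀ + r n * Real.cos (φ n)) (y₀ + r n * Real.sin (φ n)) ∈ D) →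
        Tendsto (fun n => f (pt (x₀ + r n * Real.cos (φ n)) (y₀ + r n * Real.sin (φ n))))
          atTop (𝓝 L) := by
  have hpolar : IsPolarAt (polarPt x₀ y₀) (pt x₀ y₀) (Set.Icc 0 (2 * π)) := by
    simpa only [zero_add] using isPolarAt_polarPt x₀ y₀ 0
  exact stmt_0_general hpolar isCompact_Icc D f (𝓝 L)
end

section
/- Let D ⊆ ℝ², let P₀ = (x₀, y₀) be an accumulation point of D, let f : ℝ² → ℝ and L ∈ ℝ. Assume there exists r > 0 such that the set ((B(P₀, r) \ {P₀}) ∩ D) ∪ {P₀} is convex, where B(P₀, r) is the open ball of radius r around P₀. Then f(P) → L as P → P₀ within D if and only if: for every constant φ₀ ∈ [0, 2π] and every function φ : (0, ∞) → ℝ satisfying φ(r) → φ₀ as r → 0⁺, such that the path P(r) = (x₀ + r·cos φ(r), y₀ + r·sin φ(r)) takes values in D for all sufficiently small r > 0, one has f(P(r)) → L as r → 0⁺. -/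
/-!
Let `u` parametrize the unit directions. If `f` fails to converge along `D` at `c`, it stays off
some neighbourhood of the limit along points `c + ρₙ • u θₙ` of `D` tending to `c`. Compactness of
the parameter set lets us assume that `θₙ` converges and that `ρₙ` is strictly decreasing. The step
function equal to `θₙ` on `(ρₙ₊₁, ρₙ]` then describes a path through all these points, and
star-convexity keeps it in `D`, because at radius `r ∈ (ρₙ₊₁, ρₙ]` it lies on the segment from `c`
to `c + ρₙ • u θₙ`.
-/

open Filter Topology Real

section StepPaths

variable {X Θ β : Type*} [LinearOrder X] {a : X} {ρ : ℕ → X}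

/-- The last index `n` with `r ≤ ρ n`. When `ρ` decreases strictly to `a` and `a < r ≤ ρ 0`, it is
the index of the interval `(ρ (n + 1), ρ n]` containing `r`, so that `θ ∘ lastIndex ρ` is the step
function with values `θ n`. It has the junk value `0` if there is no such `n` or no last one. -/
noncomputable def lastIndex (ρ : ℕ → X) (r : X) : ℕ :=
  sSup {n | r ≤ ρ n}

lemma lastIndex_apply_self (hρ : StrictAnti ρ) (n : ℕ) : lastIndex ρ (ρ n) = n := by
  simp only [lastIndex, hρ.le_iff_ge]
  exact csSup_Iic

variable [TopologicalSpace X] [OrderTopology X]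

lemma bddAbove_setOf_le_of_tendsto (hρ : Tendsto ρ atTop (𝓝 a)) {r : X} (hr : a < r) :
    BddAbove {n | r ≤ ρ n} := by
  obtain ⟨M, hM⟩ := eventually_atTop.1 (hρ.eventually_lt_const hr)
  exact ⟨M, fun n hn => le_of_not_ge fun hMn => (hM n hMn).not_ge hn⟩

lemma le_apply_lastIndex (hρ : Tendsto ρ atTop (𝓝 a)) {r : X} (hr : a < r) {n : ℕ}
    (hn : r ≤ ρ n) : r ≤ ρ (lastIndex ρ r) :=
  Nat.sSup_mem ⟨n, hn⟩ (bddAbove_setOf_le_of_tendsto hρ hr)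

lemma tendsto_lastIndex (hρ : Tendsto ρ atTop (𝓝 a)) (hgt : ∀ n, a < ρ n) :
    Tendsto (lastIndex ρ) (𝓝[>] a) atTop := by
  refine tendsto_atTop.2 fun n => ?_
  filter_upwards [Ioc_mem_nhdsGT (hgt n)] with r hr
  exact le_csSup (bddAbove_setOf_le_of_tendsto hρ hr.1) hr.2

lemma exists_path_through_seq (hanti : StrictAnti ρ) (hρ : Tendsto ρ atTop (𝓝 a))
    (hgt : ∀ n, a < ρ n) {θ : ℕ → Θ} {l : Filter Θ} (hθ : Tendsto θ atTop l) :
    ∃ φ : X → Θ, Tendsto φ (𝓝[>] a) l ∧ (∀ n, φ (ρ n) = θ n) ∧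
      ∀ᶠ r in 𝓝[>] a, ∃ n, r ≤ ρ n ∧ φ r = θ n := by
  refine ⟨θ ∘ lastIndex ρ, hθ.comp (tendsto_lastIndex hρ hgt),
    fun n => congrArg θ (lastIndex_apply_self hanti n), ?_⟩
  filter_upwards [Ioc_mem_nhdsGT (hgt 0)] with r hr
  exact ⟨lastIndex ρ r, le_apply_lastIndex hρ hr.1 hr.2, rfl⟩

variable [DenselyOrdered X]

lemma exists_strictAnti_subseq (hρ : Tendsto ρ atTop (𝓝[>] a)) (hgt : ∀ n, a < ρ n) :
    ∃ k : ℕ → ℕ, StrictMono k ∧ StrictAnti (ρ ∘ k) :=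
  strictMono_subseq_of_tendsto_atTop (β := (Set.Ioi a)ᵒᵈ)
    (u := fun n => OrderDual.toDual ⟨ρ n, hgt n⟩) ((tendsto_Ioi_atBot (.of_dense a)).2 hρ)

variable [FirstCountableTopology X] [TopologicalSpace Θ] {K : Set Θ}

lemma exists_strictAnti_seq_of_frequently (hK : IsSeqCompact K) {p : X × Θ → Prop}
    (hp : ∃ᶠ x in 𝓝[>] a ×ˢ 𝓟 K, p x) :
    ∃ (ρ : ℕ → X) (θ : ℕ → Θ), StrictAnti ρ ∧ Tendsto ρ atTop (𝓝 a) ∧ (∀ n, a < ρ n) ∧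
      (∃ θ₀ ∈ K, Tendsto θ atTop (𝓝 θ₀)) ∧ ∀ n, p (ρ n, θ n) := by
  have hmem : ∀ᶠ x in 𝓝[>] a ×ˢ 𝓟 K, x ∈ Set.Ioi a ×ˢ K :=
    prod_mem_prod self_mem_nhdsWithin (mem_principal_self K)
  obtain ⟨x, hx, hpx⟩ := exists_seq_forall_of_frequently (hp.and_eventually hmem)
  choose hpx hgt hxK using hpx
  obtain ⟨θ₀, hθ₀, i, hi, hθ⟩ := hK hxK
  have hρ : Tendsto (fun n => (x (i n)).1) atTop (𝓝[>] a) :=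
    (tendsto_fst.comp hx).comp hi.tendsto_atTop
  obtain ⟨j, hj, hanti⟩ := exists_strictAnti_subseq hρ fun n => hgt (i n)
  exact ⟨fun n => (x (i (j n))).1, fun n => (x (i (j n))).2, hanti,
    (tendsto_nhds_of_tendsto_nhdsWithin hρ).comp hj.tendsto_atTop, fun n => hgt (i (j n)),
    ⟨θ₀, hθ₀, hθ.comp hj.tendsto_atTop⟩, fun n => hpx (i (j n))⟩

lemma tendsto_of_forall_path (hK : IsSeqCompact K) {S : Set (X × Θ)}
    (hS : ∀ᶠ s in 𝓝[>] a, ∀ θ, (s, θ) ∈ S → ∀ r ∈ Set.Ioc a s, (r, θ) ∈ S)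
    {g : X × Θ → β} {l : Filter β}
    (hpath : ∀ θ₀ ∈ K, ∀ φ : X → Θ, Tendsto φ (𝓝[>] a) (𝓝 θ₀) →
      (∀ᶠ r in 𝓝[>] a, (r, φ r) ∈ S) → Tendsto (fun r => g (r, φ r)) (𝓝[>] a) l) :
    Tendsto g ((𝓝[>] a ×ˢ 𝓟 K) ⊓ 𝓟 S) l := by
  by_contra hg
  obtain ⟨U, hU, hfreq⟩ := not_tendsto_iff_exists_frequently_notMem.1 hg
  have hbad := (frequently_inf_principal.1 hfreq).and_eventually (tendsto_fst.eventually hS)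
  obtain ⟨ρ, θ, hanti, hρ, hgt, ⟨θ₀, hθ₀, hθ⟩, hρθ⟩ := exists_strictAnti_seq_of_frequently hK hbad
  obtain ⟨φ, hφ, hφρ, hφθ⟩ := exists_path_through_seq hanti hρ hgt hθ
  have hφS : ∀ᶠ r in 𝓝[>] a, (r, φ r) ∈ S := by
    filter_upwards [hφθ, self_mem_nhdsWithin] with r ⟨n, hrn, hφr⟩ hr
    obtain ⟨⟨hmem, -⟩, hdown⟩ := hρθ n
    exact hφr ▸ hdown (θ n) hmem r ⟨hr, hrn⟩
  have hlim : Tendsto (fun n => g (ρ n, φ (ρ n))) atTop l :=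
    (hpath θ₀ hθ₀ φ hφ hφS).comp (tendsto_nhdsWithin_iff.2 ⟨hρ, Eventually.of_forall hgt⟩)
  obtain ⟨n, hn⟩ := (hlim.eventually_mem hU).exists
  exact (hρθ n).1.2 (hφρ n ▸ hn)

end StepPaths

section PolarCoordinates

variable {E Θ β : Type*} [NormedAddCommGroup E] [NormedSpace ℝ E] {c : E}

lemma tendsto_add_smul_nhdsNE {α : Type*} {F : Filter α} {ρ : α → ℝ} {v : α → E}
    (hρ : Tendsto ρ F (𝓝[>] 0)) (hv : ∀ a, ‖v a‖ = 1) :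
    Tendsto (fun a => c + ρ a • v a) F (𝓝[≠] c) := by
  obtain ⟨hρ₀, hpos⟩ := tendsto_nhdsWithin_iff.1 hρ
  refine tendsto_nhdsWithin_iff.2 ⟨?_, ?_⟩
  · have hnorm : Tendsto (fun a => ‖ρ a • v a‖) F (𝓝 0) := by
      simpa only [norm_smul, hv, mul_one] using tendsto_zero_iff_norm_tendsto_zero.1 hρ₀
    simpa only [add_zero] using (tendsto_zero_iff_norm_tendsto_zero.2 hnorm).const_add c
  · filter_upwards [hpos] with a ha
    have hva : v a ≠ 0 := norm_ne_zero_iff.1 (hv a ▸ one_ne_zero)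
    exact add_ne_left.2 (smul_ne_zero (ne_of_gt ha) hva)

lemma exists_eq_add_norm_smul {K : Set Θ} {u : Θ → E} (hsurj : Set.SurjOn u K (Metric.sphere 0 1))
    {x : E} (hx : x ≠ c) : ∃ θ ∈ K, x = c + ‖x - c‖ • u θ := by
  have hnorm : ‖x - c‖ ≠ 0 := norm_ne_zero_iff.2 (sub_ne_zero.2 hx)
  obtain ⟨θ, hθ, hu⟩ := hsurj (a := ‖x - c‖⁻¹ • (x - c)) <| by
    rw [mem_sphere_zero_iff_norm, norm_smul, norm_inv, norm_norm, inv_mul_cancel₀ hnorm]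
  exact ⟨θ, hθ, by rw [hu, smul_inv_smul₀ hnorm, add_sub_cancel]⟩

lemma nhdsNE_eq_map_polar {K : Set Θ} {u : Θ → E} (hu : ∀ θ, ‖u θ‖ = 1)
    (hsurj : Set.SurjOn u K (Metric.sphere 0 1)) :
    𝓝[≠] c = map (fun p : ℝ × Θ => c + p.1 • u p.2) (𝓝[>] 0 ×ˢ 𝓟 K) := by
  refine le_antisymm (fun s hs => ?_) (tendsto_add_smul_nhdsNE tendsto_fst fun p => hu p.2)
  have hslice := mem_prod_principal.1 (mem_map.1 hs)
  filter_upwards [(tendsto_norm_sub_self_nhdsNE c).eventually hslice, self_mem_nhdsWithin]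
    with x hxs hx
  obtain ⟨θ, hθ, hxθ⟩ := exists_eq_add_norm_smul hsurj hx
  rw [hxθ]
  exact hxs θ hθ

lemma add_smul_mem_of_starConvex {D : Set E} {R : ℝ}
    (hD : StarConvex ℝ c (((Metric.ball c R \ {c}) ∩ D) ∪ {c})) {v : E} (hv : ‖v‖ = 1) {r s : ℝ}
    (hr : 0 < r) (hrs : r ≤ s) (hsR : s < R) (hs : c + s • v ∈ D) : c + r • v ∈ D := by
  have hs₀ : 0 < s := hr.trans_le hrs
  have hne : ∀ t : ℝ, 0 < t → c + t • v ≠ c := fun t ht =>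
    add_ne_left.2 (smul_ne_zero ht.ne' (norm_ne_zero_iff.1 (hv ▸ one_ne_zero)))
  have hball : c + s • v ∈ Metric.ball c R := by
    rwa [mem_ball_iff_norm, add_sub_cancel_left, norm_smul, hv, mul_one,
      Real.norm_of_nonneg hs₀.le]
  have hseg := hD.add_smul_sub_mem (Or.inl ⟨⟨hball, hne s hs₀⟩, hs⟩) (div_nonneg hr.le hs₀.le)
    ((div_le_one hs₀).2 hrs)
  rw [add_sub_cancel_left, smul_smul, div_mul_cancel₀ r hs₀.ne'] at hseg
  exact hseg.elim And.right fun h => absurd h (hne r hr)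

theorem stmt_2_general [TopologicalSpace Θ] {K : Set Θ} (hK : IsSeqCompact K) {u : Θ → E}
    (hu : ∀ θ, ‖u θ‖ = 1) (hsurj : Set.SurjOn u K (Metric.sphere 0 1)) {D : Set E}
    (hD : ∃ R > (0 : ℝ), StarConvex ℝ c (((Metric.ball c R \ {c}) ∩ D) ∪ {c}))
    (f : E → β) (l : Filter β) :
    Tendsto f (𝓝[D \ {c}] c) l ↔
      ∀ θ₀ ∈ K, ∀ φ : ℝ → Θ, Tendsto φ (𝓝[>] 0) (𝓝 θ₀) →
        (∀ᶠ r in 𝓝[>] (0 : ℝ), c + r • u (φ r) ∈ D) →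
        Tendsto (fun r => f (c + r • u (φ r))) (𝓝[>] 0) l := by
  rw [Set.sdiff_eq, Set.inter_comm, nhdsWithin_inter']
  constructor
  · intro hf θ₀ _ φ _ hφD
    exact hf.comp (tendsto_inf.2
      ⟨tendsto_add_smul_nhdsNE tendsto_id fun r => hu (φ r), tendsto_principal.2 hφD⟩)
  · intro hpath
    obtain ⟨R, hR, hstar⟩ := hD
    rw [nhdsNE_eq_map_polar hu hsurj, ← Filter.push_pull, comap_principal, tendsto_map'_iff]
    refine tendsto_of_forall_path hK ?_ hpath
    filter_upwards [Ioo_mem_nhdsGT hR] with s hs θ hsθ r hr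
    exact add_smul_mem_of_starConvex hstar (hu θ) hr.1 hr.2 hs.2 hsθ

end PolarCoordinates

section Plane

lemma pt_add_mul (x y r a b : ℝ) : pt (x + r * a) (y + r * b) = pt x y + r • pt a b := by
  ext i
  fin_cases i <;> simp [pt]

lemma norm_pt (x y : ℝ) : ‖pt x y‖ = √(x ^ 2 + y ^ 2) := by
  simp [pt, EuclideanSpace.norm_eq]

lemma norm_pt_cos_sin (θ : ℝ) : ‖pt (cos θ) (sin θ)‖ = 1 := by
  rw [norm_pt, cos_sq_add_sin_sq, sqrt_one]

lemma exists_cos_sin_eq {a b : ℝ} (h : a ^ 2 + b ^ 2 = 1) :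
    ∃ θ ∈ Set.Icc 0 (2 * π), cos θ = a ∧ sin θ = b := by
  have hnorm : ‖(⟨a, b⟩ : ℂ)‖ = 1 := by rw [Complex.norm_eq_sqrt_sq_add_sq, h, sqrt_one]
  have hcos := Complex.norm_mul_cos_arg ⟨a, b⟩
  have hsin := Complex.norm_mul_sin_arg ⟨a, b⟩
  rw [hnorm, one_mul] at hcos hsin
  have hper : Function.Periodic (fun θ => (cos θ, sin θ)) (2 * π) := fun θ =>
    Prod.ext (cos_add_two_pi θ) (sin_add_two_pi θ)
  obtain ⟨θ, hθ, heq⟩ := hper.exists_mem_Ico₀ two_pi_pos (Complex.arg ⟨a, b⟩)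
  obtain ⟨hcosθ, hsinθ⟩ := Prod.ext_iff.1 heq
  exact ⟨θ, Set.Ico_subset_Icc_self hθ, hcosθ.symm.trans hcos, hsinθ.symm.trans hsin⟩

lemma surjOn_pt_cos_sin :
    Set.SurjOn (fun θ => pt (cos θ) (sin θ)) (Set.Icc 0 (2 * π)) (Metric.sphere 0 1) := by
  intro v hv
  have hpt : pt (v 0) (v 1) = v := by
    ext i
    fin_cases i <;> simp [pt]
  rw [mem_sphere_zero_iff_norm, ← hpt, norm_pt, sqrt_eq_one] at hv
  obtain ⟨θ, hθ, hcos, hsin⟩ := exists_cos_sin_eq hv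
  exact ⟨θ, hθ, by simp only [hcos, hsin, hpt]⟩

end Plane

/-- **Theorem 2.** Let `D ⊆ ℝ²`, let `P₀ = (x₀, y₀)` be an accumulation point of `D`,
and assume there is `r > 0` such that `((B(P₀, r) \ {P₀}) ∩ D) ∪ {P₀}` is convex.
Then `f(P) → L` as `P → P₀` within `D` iff for every `φ₀ ∈ [0, 2π]` and every function
`φ` with `φ(r) → φ₀` as `r → 0⁺` such that the path
`P(r) = (x₀ + r cos φ(r), y₀ + r sin φ(r))` lies in `D` for all sufficiently small
`r > 0`, one has `f(P(r)) → L` as `r → 0⁺`. -/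
theorem stmt_2 (D : Set (EuclideanSpace ℝ (Fin 2))) (x₀ y₀ : ℝ)
    (hacc : AccPt (pt x₀ y₀) (𝓟 D)) (f : EuclideanSpace ℝ (Fin 2) → ℝ) (L : ℝ)
    (hconv : ∃ r > (0 : ℝ),
      Convex ℝ (((Metric.ball (pt x₀ y₀) r \ {pt x₀ y₀}) ∩ D) ∪ {pt x₀ y₀})) :
    Tendsto f (𝓝[D \ {pt x₀ y₀}] (pt x₀ y₀)) (𝓝 L) ↔
      ∀ φ₀ ∈ Set.Icc (0 : ℝ) (2 * π), ∀ φ : ℝ → ℝ,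
        Tendsto φ (𝓝[>] 0) (𝓝 φ₀) →
        (∀ᶠ r in 𝓝[>] (0 : ℝ),
          pt (x₀ + r * Real.cos (φ r)) (y₀ + r * Real.sin (φ r)) ∈ D) →
        Tendsto (fun r => f (pt (x₀ + r * Real.cos (φ r)) (y₀ + r * Real.sin (φ r))))
          (𝓝[>] 0) (𝓝 L) := by
  obtain ⟨R, hR, hconv⟩ := hconv
  simpa only [pt_add_mul] using stmt_2_general isCompact_Icc.isSeqCompact norm_pt_cos_sin
    surjOn_pt_cos_sin ⟨R, hR, hconv.starConvex (Or.inr rfl)⟩ f (𝓝 L)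
end

section
/- Let P₀, P, Q be three pairwise distinct points of the Euclidean plane ℝ². If the angle ∠(P, P₀, Q) at vertex P₀ is at most π/4 and dist(P₀, P) > 2·dist(P₀, Q), then the angle ∠(P, Q, P₀) at vertex Q is obtuse, i.e., ∠(P, Q, P₀) > π/2. -/
open Real EuclideanGeometry

/-! Projecting the other two sides of a triangle `P₀ P Q` onto the line `P₀ Q` gives
`P₀Q = P₀P · cos P₀ + PQ · cos Q`. So `cos Q` is negative as soon as `P₀Q < P₀P · cos P₀`. Here
`P₀Q < P₀P / 2 = P₀P · cos (π / 3)`, and the angle at `P₀` is at most `π / 4 < π / 3`. -/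

section

variable {V X : Type*} [NormedAddCommGroup V] [InnerProductSpace ℝ V] [MetricSpace X]
  [NormedAddTorsor V X]

theorem dist_eq_dist_mul_cos_angle_add_dist_mul_cos_angle {P₀ Q : X} (h : P₀ ≠ Q) (P : X) :
    dist P₀ Q = dist P₀ P * cos (∠ P P₀ Q) + dist P Q * cos (∠ P Q P₀) := by
  have law_at_P₀ := law_cos P P₀ Q
  have law_at_Q := law_cos P Q P₀
  rw [dist_comm P P₀, dist_comm Q P₀] at law_at_P₀
  rw [dist_comm P P₀] at law_at_Q
  refine mul_left_cancel₀ (dist_ne_zero.mpr h) ?_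
  linear_combination -(law_at_P₀ + law_at_Q) / 2

theorem pi_div_two_lt_angle_of_dist_lt_dist_mul_cos_angle {P₀ P Q : X} (h : P₀ ≠ Q)
    (hdist : dist P₀ Q < dist P₀ P * cos (∠ P P₀ Q)) : π / 2 < ∠ P Q P₀ := by
  have hproj := dist_eq_dist_mul_cos_angle_add_dist_mul_cos_angle h P
  have hcos : cos (∠ P Q P₀) < 0 := neg_of_mul_neg_right (by linarith) dist_nonneg
  contrapose! hcos
  exact cos_nonneg_of_neg_pi_div_two_le_of_le (by linarith [pi_pos, angle_nonneg P Q P₀]) hcos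

theorem stmt_3_general {P₀ P Q : X} {θ : ℝ} (h : P₀ ≠ Q) (hθ : θ ≤ π) (hangle : ∠ P P₀ Q ≤ θ)
    (hdist : dist P₀ Q < dist P₀ P * cos θ) : π / 2 < ∠ P Q P₀ := by
  have hcos : cos θ ≤ cos (∠ P P₀ Q) :=
    cos_le_cos_of_nonneg_of_le_pi (angle_nonneg P P₀ Q) hθ hangle
  refine pi_div_two_lt_angle_of_dist_lt_dist_mul_cos_angle h (hdist.trans_le ?_)
  gcongr

end

/-- If `P₀, P, Q` are pairwise distinct points of the Euclidean plane, the angle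
`∠ P P₀ Q` at vertex `P₀` is at most `π/4`, and `dist P₀ P > 2 * dist P₀ Q`, then the
angle `∠ P Q P₀` at vertex `Q` is obtuse. -/
theorem stmt_3 (P₀ P Q : EuclideanSpace ℝ (Fin 2))
    (h₁ : P₀ ≠ P) (h₂ : P₀ ≠ Q) (h₃ : P ≠ Q)
    (hangle : ∠ P P₀ Q ≤ π / 4) (hdist : dist P₀ P > 2 * dist P₀ Q) :
    ∠ P Q P₀ > π / 2 :=
  stmt_3_general (θ := π / 3) h₂ (by linarith [pi_pos]) (by linarith [pi_pos])
    (by rw [cos_pi_div_three]; linarith)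
end

section
/- Let P₀, P, Q be three pairwise distinct points of the Euclidean plane ℝ². If the angle ∠(P, P₀, Q) at vertex P₀ is at most π/4 and dist(P₀, P) > 2·dist(P₀, Q), then the distance from P₀ to the point (1 − t)·P + t·Q on the segment from P to Q is strictly decreasing as a function of t ∈ [0, 1]. -/
/-!
The signed length of the projection of `P₀P` to the direction `P₀Q` is
`dist P₀ P * cos (∠ P P₀ Q)`. If it is at least `dist P₀ Q`, then the triangle is not acute at `Q`.
Such a triangle is best seen from `Q`: with `x = P₀ - Q` and `y = P - Q`, so that `⟪x, y⟫ ≤ 0`,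
the squared distance `‖x - r • y‖² = ‖x‖² - 2 r ⟪x, y⟫ + r² ‖y‖²` increases strictly with
`r = 1 - t ≥ 0`. An angle of at most `π / 3`, with cosine at least `1 / 2`, suffices when
`2 * dist P₀ Q ≤ dist P₀ P`.
-/

open Real EuclideanGeometry

section InnerProductSpace

variable {V : Type*} [NormedAddCommGroup V] [InnerProductSpace ℝ V]

theorem norm_sub_smul_sq_real (x y : V) (r : ℝ) :
    ‖x - r • y‖ ^ 2 = ‖x‖ ^ 2 - 2 * r * inner ℝ x y + r ^ 2 * ‖y‖ ^ 2 := by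
  rw [norm_sub_sq_real, real_inner_smul_right, norm_smul, mul_pow, norm_eq_abs, sq_abs]
  ring

theorem strictMonoOn_norm_sub_smul_of_inner_nonpos {x y : V} (hxy : inner ℝ x y ≤ 0)
    (hy : y ≠ 0) : StrictMonoOn (fun r : ℝ => ‖x - r • y‖) (Set.Ici 0) := by
  intro r hr s _ hrs
  have hr₀ : 0 ≤ r := hr
  refine lt_of_pow_lt_pow_left₀ 2 (norm_nonneg _) ?_
  have linear_le : r * -inner ℝ x y ≤ s * -inner ℝ x y := by
    gcongr
    exact neg_nonneg.2 hxy
  have quadratic_lt : r ^ 2 * ‖y‖ ^ 2 < s ^ 2 * ‖y‖ ^ 2 := by gcongr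
  rw [norm_sub_smul_sq_real, norm_sub_smul_sq_real]
  linarith

variable {E : Type*} [MetricSpace E] [NormedAddTorsor V E]

theorem strictAntiOn_dist_lineMap_of_inner_nonpos {a p q : E} (hpq : p ≠ q)
    (hinner : inner ℝ (a -ᵥ q) (p -ᵥ q) ≤ 0) :
    StrictAntiOn (fun t : ℝ => dist a (AffineMap.lineMap p q t)) (Set.Iic 1) := by
  have dist_eq (t : ℝ) :
      dist a (AffineMap.lineMap p q t) = ‖(a -ᵥ q) - (1 - t) • (p -ᵥ q)‖ := by
    rw [← AffineMap.lineMap_apply_one_sub, AffineMap.lineMap_apply, dist_eq_norm_vsub V,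
      vsub_vadd_eq_vsub_sub]
  intro s hs t ht hst
  simp only [dist_eq]
  exact strictMonoOn_norm_sub_smul_of_inner_nonpos hinner (vsub_ne_zero.2 hpq)
    (Set.mem_Ici.2 (sub_nonneg.2 ht)) (Set.mem_Ici.2 (sub_nonneg.2 hs)) (sub_lt_sub_left hst 1)

theorem inner_vsub_vsub_nonpos_of_dist_le_cos_angle_mul_dist {a p q : E}
    (h : dist a q ≤ cos (∠ p a q) * dist a p) : inner ℝ (a -ᵥ q) (p -ᵥ q) ≤ 0 := by
  have hnorm : ‖q -ᵥ a‖ ≤ cos (∠ p a q) * ‖p -ᵥ a‖ := by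
    simpa only [dist_eq_norm_vsub' V] using h
  calc inner ℝ (a -ᵥ q) (p -ᵥ q)
      = ‖q -ᵥ a‖ ^ 2 - inner ℝ (p -ᵥ a) (q -ᵥ a) := by
        rw [← neg_vsub_eq_vsub_rev q a, ← vsub_sub_vsub_cancel_right p q a, inner_neg_left,
          inner_sub_right, real_inner_self_eq_norm_sq, real_inner_comm]
        ring
    _ = ‖q -ᵥ a‖ * ‖q -ᵥ a‖ - cos (∠ p a q) * ‖p -ᵥ a‖ * ‖q -ᵥ a‖ := by
        rw [← InnerProductGeometry.cos_angle_mul_norm_mul_norm, angle]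
        ring
    _ ≤ 0 := sub_nonpos.2 (by gcongr)

theorem stmt_4_general {P₀ P Q : E} (hPQ : P ≠ Q) (hangle : ∠ P P₀ Q ≤ π / 3)
    (hdist : 2 * dist P₀ Q ≤ dist P₀ P) :
    StrictAntiOn (fun t : ℝ => dist P₀ (AffineMap.lineMap P Q t)) (Set.Iic 1) := by
  have half_le_cos : 1 / 2 ≤ cos (∠ P P₀ Q) := by
    rw [← cos_pi_div_three]
    exact cos_le_cos_of_nonneg_of_le_pi (angle_nonneg _ _ _) (by linarith [pi_pos]) hangle
  refine strictAntiOn_dist_lineMap_of_inner_nonpos hPQ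
    (inner_vsub_vsub_nonpos_of_dist_le_cos_angle_mul_dist ?_)
  calc dist P₀ Q ≤ 1 / 2 * dist P₀ P := by linarith
    _ ≤ cos (∠ P P₀ Q) * dist P₀ P := by gcongr

end InnerProductSpace

/-- If `P₀, P, Q` are pairwise distinct points of the Euclidean plane, the angle
`∠ P P₀ Q` at vertex `P₀` is at most `π/4`, and `dist P₀ P > 2 * dist P₀ Q`, then the
distance from `P₀` to the point `(1 - t) • P + t • Q` of the segment from `P` to `Q`
is strictly decreasing as a function of `t ∈ [0, 1]`. -/
theorem stmt_4 (P₀ P Q : EuclideanSpace ℝ (Fin 2))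
    (h₁ : P₀ ≠ P) (h₂ : P₀ ≠ Q) (h₃ : P ≠ Q)
    (hangle : ∠ P P₀ Q ≤ π / 4) (hdist : dist P₀ P > 2 * dist P₀ Q) :
    StrictAntiOn (fun t : ℝ => dist P₀ ((1 - t) • P + t • Q)) (Set.Icc 0 1) := by
  simpa only [AffineMap.lineMap_apply_module] using
    (stmt_4_general h₃ (by linarith [pi_pos]) hdist.le).mono Set.Icc_subset_Iic_self
end
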